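/- arXiv:1703.04422 — 2 statements merged into one kernel-verified Lean document; each statement's English description precedes it below -/
import Mathlib

section
/- Let A = (A_1,…,A_d) be a commuting d-tuple of bounded operators on a Hilbert space H satisfying the strict row contraction condition ∑_{j=1}^d ‖A_j h‖² ≤ r² ‖h‖² for all h ∈ H, for some 0 < r < 1. Let D = (I − ∑_{j=1}^d A_j^* A_j)^{1/2} be the defect operator. Then for every h ∈ H, ∑_{n∈ℕ^d} β(n) ‖D A^n h‖² = ‖h‖². -/
open scoped BigOperators ComplexConjugate

noncomputable section

namespace DruryArveson

/-- Multi-indices. -/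
abbrev Idx (d : ℕ) := Fin d → ℕ

/-- The weight `β(n) = |n|!/n!`. -/
def beta (d : ℕ) (n : Idx d) : ℝ :=
  ((∑ j, n j).factorial : ℝ) / ∏ j, ((n j).factorial : ℝ)

/-- standard basis multi-index `e_j`. -/
def e (d : ℕ) (j : Fin d) : Idx d := fun i => if i = j then 1 else 0

/-- A set `X ⊆ ℕ^d` is monotone if its complement is shift invariant. -/
def MonotoneSet (d : ℕ) (X : Set (Idx d)) : Prop :=
  ∀ n, n ∉ X → ∀ j, n + e d j ∉ X

/-- membership in the Drury–Arveson space (coefficientwise). -/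
def MemHd (d : ℕ) (a : Idx d → ℂ) : Prop :=
  Summable fun n => ‖a n‖ ^ 2 / beta d n

/-- the Drury–Arveson norm. -/
def hdNorm (d : ℕ) (a : Idx d → ℂ) : ℝ :=
  Real.sqrt (∑' n, ‖a n‖ ^ 2 / beta d n)

/-- the Drury–Arveson inner product. -/
def hdInner (d : ℕ) (a b : Idx d → ℂ) : ℂ :=
  ∑' n, a n * conj (b n) / (beta d n : ℂ)

/-- membership in `H_d(X)`. -/
def MemHdX (d : ℕ) (X : Set (Idx d)) (a : Idx d → ℂ) : Prop :=
  (∀ n ∉ X, a n = 0) ∧ MemHd d a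

/-- membership in `ℓ²(X, β)`. -/
def MemL2 (d : ℕ) (X : Set (Idx d)) (g : Idx d → ℂ) : Prop :=
  (∀ n ∉ X, g n = 0) ∧ Summable fun n => ‖g n‖ ^ 2 * beta d n

/-- the norm of `ℓ²(ℕ^d, β)`. -/
def l2Norm (d : ℕ) (g : Idx d → ℂ) : ℝ :=
  Real.sqrt (∑' n, ‖g n‖ ^ 2 * beta d n)

/-- the inner product of `ℓ²(ℕ^d, β)`. -/
def l2Inner (d : ℕ) (g h : Idx d → ℂ) : ℂ :=
  ∑' n, g n * conj (h n) * (beta d n : ℂ)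

/-- the compressed backshift `B_j^X = P_X B_j|_{ℓ²(X,β)}`. -/
def BXop (d : ℕ) (X : Set (Idx d)) (j : Fin d) (g : Idx d → ℂ) : Idx d → ℂ :=
  X.indicator fun n => g (n + e d j)

/-- ordered power `(T_1)^{k_1} ∘ ⋯ ∘ (T_d)^{k_d}` of a `d`-tuple of maps. -/
def opPow (d : ℕ) {α : Type*} (T : Fin d → (α → α)) (k : Idx d) : α → α :=
  (List.ofFn fun j => (T j)^[k j]).foldr (· ∘ ·) id

/-- multiplication by `z_j` on coefficients. -/
def Mop (d : ℕ) (j : Fin d) (a : Idx d → ℂ) : Idx d → ℂ :=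
  fun n => if 0 < n j then a (n - e d j) else 0

/-- the compressed multiplication `M_j^X = P_X M_j|_{H_d(X)}`. -/
def MopX (d : ℕ) (X : Set (Idx d)) (j : Fin d) (a : Idx d → ℂ) : Idx d → ℂ :=
  X.indicator (Mop d j a)

/-- the Taylor coefficients of a polynomial of `d` variables. -/
def Qhat (d : ℕ) (Q : MvPolynomial (Fin d) ℂ) (n : Idx d) : ℂ :=
  Q.coeff (Finsupp.equivFunOnFinite.symm n)

/-- `Q(T)` for a `d`-tuple of maps on the coefficient space. -/
def polyOp (d : ℕ) (Q : MvPolynomial (Fin d) ℂ)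
    (T : Fin d → ((Idx d → ℂ) → (Idx d → ℂ))) (a : Idx d → ℂ) : Idx d → ℂ :=
  fun n => ∑ k ∈ Q.support, Q.coeff k * opPow d T (⇑k) a n

/-- operator norm of a map with respect to the `ℓ²(X,β)` norm. -/
def opNormL2 (d : ℕ) (X : Set (Idx d)) (T : (Idx d → ℂ) → (Idx d → ℂ)) : ℝ :=
  sInf {C | 0 ≤ C ∧ ∀ g, MemL2 d X g → l2Norm d (T g) ≤ C * l2Norm d g}

/-- operator norm of a map with respect to the `H_d(X)` norm. -/
def opNormHdX (d : ℕ) (X : Set (Idx d)) (T : (Idx d → ℂ) → (Idx d → ℂ)) : ℝ :=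
  sInf {C | 0 ≤ C ∧ ∀ a, MemHdX d X a → hdNorm d (T a) ≤ C * hdNorm d a}

/-- coefficients of the product `φ · f` of two power series. -/
def mconv (d : ℕ) (φ a : Idx d → ℂ) (m : Idx d) : ℂ :=
  ∑ k ∈ Finset.Iic m, φ k * a (m - k)

/-- `φ` is a multiplier of `H_d`. -/
def IsMultiplier (d : ℕ) (φ : Idx d → ℂ) : Prop :=
  ∀ a, MemHd d a → MemHd d (mconv d φ a)

/-- the multiplier norm `‖φ‖_{M(H_d)}`. -/
def multNorm (d : ℕ) (φ : Idx d → ℂ) : ℝ :=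
  sInf {C | 0 ≤ C ∧ ∀ a, MemHd d a → hdNorm d (mconv d φ a) ≤ C * hdNorm d a}

/-- `A^n = A_1^{n_1} ⋯ A_d^{n_d}` for a tuple of bounded operators. -/
def ApowCLM (d : ℕ) {H : Type*} [NormedAddCommGroup H] [NormedSpace ℂ H]
    (A : Fin d → H →L[ℂ] H) (n : Idx d) : H →L[ℂ] H :=
  (List.ofFn fun j => A j ^ n j).prod

/-- `Q(A) = ∑ c_k A^k` for a tuple of bounded operators. -/
def QevalCLM (d : ℕ) {H : Type*} [NormedAddCommGroup H] [NormedSpace ℂ H]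
    (A : Fin d → H →L[ℂ] H) (Q : MvPolynomial (Fin d) ℂ) : H →L[ℂ] H :=
  ∑ k ∈ Q.support, Q.coeff k • ApowCLM d A ⇑k

/-- monomial `z^n`. -/
def mpow (d : ℕ) (z : Fin d → ℂ) (n : Idx d) : ℂ := ∏ j, z j ^ n j


theorem prod_add_e {M : Type*} [Monoid M] : ∀ (d : ℕ) (a : Fin d → M)
    (_ : ∀ i j, Commute (a i) (a j)) (n : Idx d) (j : Fin d),
    (List.ofFn fun i => a i ^ (n + e d j) i).prod = a j * (List.ofFn fun i => a i ^ n i).prod := by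
  intro d
  induction d with
  | zero => intro a _ n j; exact j.elim0
  | succ d ih =>
    intro a hc n j
    rw [List.ofFn_succ, List.ofFn_succ, List.prod_cons, List.prod_cons]
    refine Fin.cases ?_ (fun j => ?_) j
    · have h1 : ∀ i : Fin d, (n + e (d+1) 0) i.succ = n i.succ := by
        intro i; simp [e, Fin.succ_ne_zero]
      have h0 : (n + e (d+1) 0) 0 = n 0 + 1 := by simp [e]
      simp only [h1, h0, pow_succ', mul_assoc]
    · have h1 : ∀ i : Fin d, (n + e (d+1) j.succ) i.succ = ((fun i => n i.succ) + e d j : Idx d) i := by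
        intro i; simp [e]
      have h0 : (n + e (d+1) j.succ) 0 = n 0 := by simp [e, (Fin.succ_ne_zero _).symm]
      simp only [h1, h0]
      rw [ih (fun i => a i.succ) (fun _ _ => hc _ _) (fun i => n i.succ) j,
        ← mul_assoc, ← mul_assoc, ((hc 0 j.succ).pow_left _).eq]

theorem sum_add_e (d : ℕ) (n : Idx d) (j : Fin d) : ∑ i, (n + e d j) i = ∑ i, n i + 1 := by
  simp [e, Finset.sum_add_distrib]

theorem beta_add_e (d : ℕ) (n : Idx d) (j : Fin d) :
    beta d n = beta d (n + e d j) * ((n + e d j) j / ((∑ i, n i : ℕ) + 1 : ℝ)) := by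
  have hp : ∏ i, (((n + e d j) i).factorial : ℝ) = (n j + 1) * ∏ i, ((n i).factorial : ℝ) := by
    rw [← Finset.mul_prod_erase _ _ (Finset.mem_univ j),
      ← Finset.mul_prod_erase _ (fun i => ((n i).factorial : ℝ)) (Finset.mem_univ j)]
    have : ∏ i ∈ Finset.univ.erase j, (((n + e d j) i).factorial : ℝ)
        = ∏ i ∈ Finset.univ.erase j, ((n i).factorial : ℝ) := by
      refine Finset.prod_congr rfl fun i hi => ?_
      simp [e, Finset.ne_of_mem_erase hi]
    rw [this]
    simp [e, Nat.factorial_succ, mul_assoc]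
  unfold beta
  rw [hp, sum_add_e, Nat.factorial_succ]
  have h2 : ∏ i, ((n i).factorial : ℝ) ≠ 0 :=
    Finset.prod_ne_zero_iff.2 fun i _ => by positivity
  have h3 : ((n + e d j) j : ℝ) = n j + 1 := by simp [e]
  have h4 : (n j + 1 : ℝ) ≠ 0 := by positivity
  have h5 : (((∑ i, n i : ℕ) : ℝ) + 1) ≠ 0 := by positivity
  rw [h3]
  generalize (∑ i, n i) = s at *
  push_cast
  field_simp

/-- multi-indices of degree `k`. -/
def lev (d k : ℕ) : Finset (Idx d) := Finset.piAntidiag Finset.univ k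

theorem mem_lev {d k : ℕ} {n : Idx d} : n ∈ lev d k ↔ ∑ i, n i = k := by
  simp [lev]

theorem shift_sum (d k : ℕ) (F : Idx d → ℝ) (j : Fin d) :
    ∑ n ∈ lev d k, beta d n * F (n + e d j)
      = ∑ m ∈ lev d (k+1), (m j : ℝ) / (k + 1) * (beta d m * F m) := by
  rw [← Finset.sum_filter_of_ne (s := lev d (k+1)) (p := fun m => m j ≠ 0)]
  · refine Finset.sum_bij (fun n _ => n + e d j) ?_ ?_ ?_ ?_
    · intro n hn
      rw [mem_lev] at hn
      simp only [Finset.mem_filter, mem_lev, sum_add_e, hn, true_and]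
      simp [e]
    · intro a _ b _ hab
      exact add_right_cancel hab
    · intro m hm
      simp only [Finset.mem_filter, mem_lev] at hm
      have hme : (m - e d j) + e d j = m := by
        funext i
        by_cases hi : i = j
        · subst hi; simp [e]; omega
        · simp [e, hi]
      refine ⟨m - e d j, ?_, hme⟩
      rw [mem_lev]
      have := sum_add_e d (m - e d j) j
      rw [hme] at this
      omega
    · intro n hn
      rw [mem_lev] at hn
      rw [beta_add_e d n j, hn]
      ring
  · intro m _ hne h0
    exact hne (by simp [h0])

theorem shift_sum_all (d k : ℕ) (F : Idx d → ℝ) :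
    ∑ n ∈ lev d k, beta d n * ∑ j, F (n + e d j) = ∑ m ∈ lev d (k+1), beta d m * F m := by
  simp only [Finset.mul_sum]
  rw [Finset.sum_comm]
  simp only [shift_sum]
  rw [Finset.sum_comm]
  refine Finset.sum_congr rfl fun m hm => ?_
  rw [mem_lev] at hm
  rw [← Finset.sum_mul, ← Finset.sum_div, ← Nat.cast_sum, hm]
  have : ((k : ℝ) + 1) ≠ 0 := by positivity
  push_cast
  rw [div_self this, one_mul]

theorem beta_nonneg (d : ℕ) (n : Idx d) : 0 ≤ beta d n := by
  unfold beta; positivity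

/-- **Drury's isometry.** Let `A` be a commuting `d`-tuple of bounded
operators on a complex Hilbert space `H` with `∑_j ‖A_j h‖² ≤ r² ‖h‖²` for some
`0 < r < 1`, and let `D = (I - ∑_j A_j^* A_j)^{1/2}` be the defect operator (the positive
square root).  Then `∑_{n ∈ ℕ^d} β(n) ‖D A^n h‖² = ‖h‖²` for every `h ∈ H`. -/
theorem defect_isometry (d : ℕ) {H : Type*} [NormedAddCommGroup H]
    [InnerProductSpace ℂ H] [CompleteSpace H] (A : Fin d → H →L[ℂ] H)
    (hcomm : ∀ i j, A i ∘L A j = A j ∘L A i)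
    (r : ℝ) (hr0 : 0 < r) (hr1 : r < 1)
    (hrow : ∀ h : H, ∑ j, ‖A j h‖ ^ 2 ≤ r ^ 2 * ‖h‖ ^ 2)
    (D : H →L[ℂ] H) (hDpos : D.IsPositive)
    (hDsq : D ∘L D = 1 - ∑ j, (ContinuousLinearMap.adjoint (A j)) ∘L A j)
    (h : H) :
    HasSum (fun n : Idx d => beta d n * ‖D (ApowCLM d A n h)‖ ^ 2) (‖h‖ ^ 2) := by
  have hD : ∀ x : H, ‖D x‖ ^ 2 = ‖x‖ ^ 2 - ∑ j, ‖A j x‖ ^ 2 := by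
    intro x
    have h1 : inner ℂ (D x) (D x) = inner ℂ ((D ∘L D) x) x := by
      have := hDpos.isSelfAdjoint.isSymmetric (D x) x
      simpa using this.symm
    rw [hDsq] at h1
    simp only [ContinuousLinearMap.sub_apply, ContinuousLinearMap.sum_apply, inner_sub_left,
      sum_inner, ContinuousLinearMap.comp_apply, ContinuousLinearMap.adjoint_inner_left,
      ContinuousLinearMap.one_apply, inner_self_eq_norm_sq_to_K] at h1
    exact_mod_cast h1
  have hstep : ∀ (n : Idx d) (j : Fin d), ApowCLM d A (n + e d j) h = A j (ApowCLM d A n h) := by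
    intro n j
    unfold ApowCLM
    rw [prod_add_e d A (fun i j => hcomm i j) n j]
    rfl
  set f : Idx d → ℝ := fun n => beta d n * ‖D (ApowCLM d A n h)‖ ^ 2 with hf
  have hf0 : ∀ n, 0 ≤ f n := fun n => mul_nonneg (beta_nonneg d n) (by positivity)
  set S : ℕ → ℝ := fun k => ∑ n ∈ lev d k, beta d n * ‖ApowCLM d A n h‖ ^ 2 with hS
  have hS0 : ∀ k, 0 ≤ S k := fun k =>
    Finset.sum_nonneg fun n _ => mul_nonneg (beta_nonneg d n) (by positivity)
  have hSs : ∀ k, S (k+1) = ∑ n ∈ lev d k, beta d n * ∑ j, ‖A j (ApowCLM d A n h)‖ ^ 2 := by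
    intro k
    rw [hS]
    simp only [← hstep]
    exact (shift_sum_all d k (fun n => ‖ApowCLM d A n h‖ ^ 2)).symm
  have hlev : ∀ k, ∑ n ∈ lev d k, f n = S k - S (k+1) := by
    intro k
    rw [hSs, hS, ← Finset.sum_sub_distrib]
    refine Finset.sum_congr rfl fun n _ => ?_
    rw [hf]
    simp only [hD]
    ring
  have hSr : ∀ k, S (k+1) ≤ r ^ 2 * S k := by
    intro k
    rw [hSs, hS, Finset.mul_sum]
    refine Finset.sum_le_sum fun n _ => ?_
    have := mul_le_mul_of_nonneg_left (hrow (ApowCLM d A n h)) (beta_nonneg d n)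
    linarith
  have hSzero : S 0 = ‖h‖ ^ 2 := by
    have : lev d 0 = {0} := by simp [lev]
    rw [hS]
    simp only [this, Finset.sum_singleton]
    simp [beta, ApowCLM]
  have hSpow : ∀ k, S k ≤ (r ^ 2) ^ k * ‖h‖ ^ 2 := by
    intro k
    induction k with
    | zero => simp [hSzero]
    | succ k ih =>
      calc S (k+1) ≤ r ^ 2 * S k := hSr k
        _ ≤ r ^ 2 * ((r ^ 2) ^ k * ‖h‖ ^ 2) := by gcongr
        _ = _ := by ring
  have hSlim : Filter.Tendsto S Filter.atTop (nhds 0) := by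
    refine squeeze_zero hS0 hSpow ?_
    have := (tendsto_pow_atTop_nhds_zero_of_lt_one (sq_nonneg r) (by nlinarith : r ^ 2 < 1)).mul_const
      (‖h‖ ^ 2)
    simpa using this
  set T : ℕ → Finset (Idx d) := fun K => (Finset.range K).biUnion (lev d) with hT
  have hmemT : ∀ K n, n ∈ T K ↔ ∑ i, n i < K := by
    intro K n
    simp [hT, mem_lev]
  have hTsum : ∀ K, ∑ n ∈ T K, f n = ‖h‖ ^ 2 - S K := by
    intro K
    rw [hT, Finset.sum_biUnion]
    · simp only [hlev]
      rw [Finset.sum_range_sub', hSzero]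
    · intro a _ b _ hab
      refine Finset.disjoint_left.2 fun n ha hb => hab ?_
      rw [mem_lev] at ha hb
      omega
  have hTmono : Monotone T := by
    intro a b hab n hn
    rw [hmemT] at *
    omega
  have hTtop : Filter.Tendsto T Filter.atTop Filter.atTop :=
    Filter.tendsto_atTop_finset_of_monotone hTmono
      fun n => ⟨∑ i, n i + 1, (hmemT _ _).2 (Nat.lt_succ_self _)⟩
  have hsum : Summable f := by
    refine summable_of_sum_le (c := ‖h‖ ^ 2) hf0 fun u => ?_
    obtain ⟨K, hK⟩ := (hTtop.eventually (Filter.eventually_ge_atTop u)).exists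
    calc ∑ n ∈ u, f n ≤ ∑ n ∈ T K, f n :=
          Finset.sum_le_sum_of_subset_of_nonneg hK fun n _ _ => hf0 n
      _ ≤ _ := by rw [hTsum]; linarith [hS0 K]
  have hl1 : Filter.Tendsto (fun K => ∑ n ∈ T K, f n) Filter.atTop (nhds (∑' n, f n)) :=
    hsum.hasSum.comp hTtop
  have hl2 : Filter.Tendsto (fun K => ∑ n ∈ T K, f n) Filter.atTop (nhds (‖h‖ ^ 2)) := by
    simp only [hTsum]
    simpa using hSlim.const_sub (‖h‖ ^ 2)
  rw [← tendsto_nhds_unique hl1 hl2]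
  exact hsum.hasSum

end DruryArveson
end
end

section
/- Let X ⊆ ℕ^d be a monotone set. Then for every complex polynomial Q in d variables, ‖Q(B^X)‖ = ‖Q(M_z^X)‖, where the left-hand norm is the operator norm on ℓ²(X,β) and the right-hand norm is the operator norm on H_d(X). -/
open scoped BigOperators ComplexConjugate

noncomputable section

namespace DruryArveson

section Aux

variable {d : ℕ}

lemma beta_pos (n : Idx d) : 0 < beta d n := by
  unfold beta
  have : ∀ j ∈ (Finset.univ : Finset (Fin d)), (0 : ℝ) < ((n j).factorial : ℝ) := fun j _ => by
    exact_mod_cast Nat.factorial_pos _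
  exact div_pos (by exact_mod_cast Nat.factorial_pos _) (Finset.prod_pos this)

lemma beta_le_add_e (n : Idx d) (j : Fin d) : beta d n ≤ beta d (n + e d j) := by
  have h1 : ∑ i, (n + e d j) i = (∑ i, n i) + 1 := by
    simp [e, Finset.sum_add_distrib]
  have h2 : ∏ i, (((n + e d j) i).factorial : ℝ)
      = (∏ i, ((n i).factorial : ℝ)) * ((n j : ℝ) + 1) := by
    have : ∀ i, (((n + e d j) i).factorial : ℝ)
        = ((n i).factorial : ℝ) * (if i = j then (n i : ℝ) + 1 else 1) := by
      intro i
      by_cases h : i = j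
      · simp [e, h, Nat.factorial_succ, mul_comm]
      · simp [e, h]
    simp only [this]
    rw [Finset.prod_mul_distrib]
    simp
  have h3 : (n j : ℝ) ≤ ((∑ i, n i : ℕ) : ℝ) := by
    exact_mod_cast Finset.single_le_sum (f := n) (fun i _ => Nat.zero_le _) (Finset.mem_univ j)
  have h4 : (0 : ℝ) < ∏ i, ((n i).factorial : ℝ) :=
    Finset.prod_pos fun i _ => by exact_mod_cast Nat.factorial_pos _
  unfold beta
  rw [h1, h2, Nat.factorial_succ]
  push_cast at h3 ⊢
  have h5 : (0 : ℝ) ≤ ((∑ i, n i).factorial : ℝ) := by positivity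
  rw [div_le_div_iff₀ h4 (by positivity)]
  have := mul_le_mul_of_nonneg_left h3 (mul_nonneg h5 h4.le)
  nlinarith

lemma exists_e_of_ne_zero (k : Idx d) (hk : k ≠ 0) : ∃ j k', k = k' + e d j := by
  obtain ⟨j, hj⟩ := Function.ne_iff.mp hk
  refine ⟨j, k - e d j, ?_⟩
  funext i
  simp only [Pi.zero_apply] at hj
  by_cases h : i = j
  · subst h; simp [e]; omega
  · simp [e, h]

lemma idx_induction {P : Idx d → Prop} (h0 : P 0) (hs : ∀ k j, P k → P (k + e d j)) (k : Idx d) :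
    P k := by
  induction hm : ∑ i, k i generalizing k with
  | zero =>
    have : k = 0 := by
      funext i
      have := Finset.sum_eq_zero_iff.mp hm i (Finset.mem_univ i)
      simpa using this
    rwa [this]
  | succ m ih =>
    have hk : k ≠ 0 := by rintro rfl; simp at hm
    obtain ⟨j, k', rfl⟩ := exists_e_of_ne_zero k hk
    apply hs
    apply ih
    simp [e, Finset.sum_add_distrib] at hm
    exact hm

lemma beta_le_add (n k : Idx d) : beta d n ≤ beta d (n + k) := by
  induction k using idx_induction with
  | h0 => simp
  | hs k j ih => rw [← add_assoc]; exact ih.trans (beta_le_add_e _ _)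

lemma mem_of_add {X : Set (Idx d)} (hX : MonotoneSet d X) (n k : Idx d) (h : n + k ∈ X) :
    n ∈ X := by
  induction k using idx_induction with
  | h0 => simpa using h
  | hs k j ih =>
    apply ih
    by_contra hn
    exact hX _ hn j (by rwa [add_assoc])

/-- Backward shift by a multi-index. -/
def Bs (k : Idx d) (g : Idx d → ℂ) : Idx d → ℂ := fun n => g (n + k)

open Classical in
/-- Compressed forward shift by a multi-index. -/
def Ms (X : Set (Idx d)) (k : Idx d) (a : Idx d → ℂ) : Idx d → ℂ :=
  fun n => if n ∈ X ∧ k ≤ n then a (n - k) else 0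

/-- Functions supported in `X`. -/
def Supp (X : Set (Idx d)) (a : Idx d → ℂ) : Prop := ∀ n ∉ X, a n = 0

lemma Bs_supp {X : Set (Idx d)} (hX : MonotoneSet d X) (k : Idx d) {g : Idx d → ℂ}
    (hg : Supp X g) : Supp X (Bs k g) := fun n hn => hg _ fun h => hn (mem_of_add hX n k h)

lemma Ms_supp {X : Set (Idx d)} (k : Idx d) (g : Idx d → ℂ) : Supp X (Ms X k g) :=
  fun n hn => by simp [Ms, hn]

lemma Ms_Ms {X : Set (Idx d)} (hX : MonotoneSet d X) (k l : Idx d) (a : Idx d → ℂ) :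
    Ms X k (Ms X l a) = Ms X (k + l) a := by
  funext n
  unfold Ms
  by_cases hn : n ∈ X
  · by_cases hk : k ≤ n
    · have h1 : n - k ∈ X := mem_of_add hX _ k (by rwa [tsub_add_cancel_of_le hk])
      have h2 : l ≤ n - k ↔ k + l ≤ n := by
        rw [add_comm]; exact le_tsub_iff_right hk
      rw [if_pos ⟨hn, hk⟩]
      by_cases h : k + l ≤ n
      · rw [if_pos ⟨h1, h2.mpr h⟩, if_pos ⟨hn, h⟩, tsub_tsub]
      · rw [if_neg fun h' => h (h2.mp h'.2), if_neg fun h' => h h'.2]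
    · have : ¬ (k + l ≤ n) := fun h => hk (le_trans le_self_add h)
      simp [hk, this]
  · simp [hn]

/-- An abstract version of: iterating and composing shifts gives shifts. -/
lemma opPow_eq (P : (Idx d → ℂ) → Prop) (T : Fin d → (Idx d → ℂ) → (Idx d → ℂ))
    (S : Idx d → (Idx d → ℂ) → (Idx d → ℂ))
    (hT : ∀ j a, P a → T j a = S (e d j) a) (hP : ∀ k a, P a → P (S k a))
    (hS : ∀ k l a, P a → S k (S l a) = S (k + l) a) (h0 : ∀ a, P a → S 0 a = a)
    (k : Idx d) (a : Idx d → ℂ) (ha : P a) : opPow d T k a = S k a := by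
  have hit : ∀ j m a, P a → (T j)^[m] a = S (m • e d j) a := by
    intro j m
    induction m with
    | zero => intro a ha; simp [h0 a ha]
    | succ m ih =>
      intro a ha
      rw [Function.iterate_succ_apply, hT j a ha, ih _ (hP _ _ ha), hS _ _ _ ha, succ_nsmul]
  have hl : ∀ l : List (Fin d), (l.map fun j => (T j)^[k j]).foldr (· ∘ ·) id a
      = S ((l.map fun j => k j • e d j).sum) a := by
    intro l
    induction l with
    | nil => simp [h0 a ha]
    | cons j l ih =>
      simp only [List.map_cons, List.foldr_cons, Function.comp_apply, List.sum_cons]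
      rw [ih, hit _ _ _ (hP _ _ ha), hS _ _ _ ha]
  unfold opPow
  rw [List.ofFn_eq_map, hl]
  congr 1
  rw [← List.ofFn_eq_map, List.sum_ofFn]
  funext i
  simp [e, Finset.sum_apply]

lemma opPow_B {X : Set (Idx d)} (hX : MonotoneSet d X) (k : Idx d) (g : Idx d → ℂ)
    (hg : Supp X g) : opPow d (BXop d X) k g = Bs k g := by
  refine opPow_eq (Supp X) _ Bs ?_ (fun k a ha => Bs_supp hX k ha) ?_ ?_ k g hg
  · intro j a ha
    funext n
    unfold BXop
    by_cases hn : n ∈ X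
    · simp [hn, Bs]
    · simp [hn, Bs_supp hX _ ha n hn]
  · intro k l a _
    funext n
    simp [Bs, add_assoc]
  · intro a _
    funext n
    simp [Bs]

lemma opPow_M {X : Set (Idx d)} (hX : MonotoneSet d X) (k : Idx d) (g : Idx d → ℂ)
    (hg : Supp X g) : opPow d (MopX d X) k g = Ms X k g := by
  refine opPow_eq (Supp X) _ (Ms X) ?_ (fun k a _ => Ms_supp k a)
    (fun k l a _ => Ms_Ms hX k l a) ?_ k g hg
  · intro j a ha
    funext n
    have : e d j ≤ n ↔ 0 < n j := by
      constructor
      · intro h; have := h j; simp [e] at this; omega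
      · intro h i
        by_cases hi : i = j
        · subst hi; simp [e]; omega
        · simp [e, hi]
    by_cases hn : n ∈ X
    · simp [MopX, Mop, hn, Ms, this]
    · simp [MopX, hn, Ms]
  · intro a ha
    funext n
    by_cases hn : n ∈ X
    · simp [hn, Ms]
    · simp [hn, Ms, ha n hn]

/-- weighted square summability -/
def Sq (w : Idx d → ℝ) (a : Idx d → ℂ) : Prop := Summable fun n => ‖a n‖ ^ 2 * w n

lemma cauchy_schwarz (w v : Idx d → ℝ) (hw : ∀ n, 0 < w n) (hv : ∀ n, v n = (w n)⁻¹)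
    (x y : Idx d → ℂ) (hx : Sq w x) (hy : Sq v y) :
    Summable (fun n => x n * y n) ∧
    ‖∑' n, x n * y n‖ ≤ Real.sqrt (∑' n, ‖x n‖ ^ 2 * w n) * Real.sqrt (∑' n, ‖y n‖ ^ 2 * v n) := by
  have e1 : ∀ n, (‖x n‖ * Real.sqrt (w n)) ^ (2 : ℝ) = ‖x n‖ ^ 2 * w n := fun n => by
    rw [Real.rpow_two, mul_pow, Real.sq_sqrt (hw n).le]
  have e2 : ∀ n, (‖y n‖ * (Real.sqrt (w n))⁻¹) ^ (2 : ℝ) = ‖y n‖ ^ 2 * v n := fun n => by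
    rw [Real.rpow_two, mul_pow, inv_pow, Real.sq_sqrt (hw n).le, hv]
  have e3 : ∀ n, (‖x n‖ * Real.sqrt (w n)) * (‖y n‖ * (Real.sqrt (w n))⁻¹) = ‖x n * y n‖ :=
    fun n => by
      have := (Real.sqrt_pos.mpr (hw n)).ne'
      rw [norm_mul]; field_simp
  have key := Real.summable_and_inner_le_Lp_mul_Lq_tsum_of_nonneg (p := 2) (q := 2)
    (f := fun n => ‖x n‖ * Real.sqrt (w n)) (g := fun n => ‖y n‖ * (Real.sqrt (w n))⁻¹)
    Real.HolderConjugate.two_two (fun n => by positivity) (fun n => by positivity)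
    (by simp only [e1]; exact hx) (by simp only [e2]; exact hy)
  simp only [e1, e2, e3, ← Real.sqrt_eq_rpow] at key
  exact ⟨key.1.of_norm, (norm_tsum_le_tsum_norm key.1).trans key.2⟩

lemma Sq.sum {w : Idx d → ℝ} (hw : ∀ n, 0 < w n) {ι : Type*} (s : Finset ι) (c : ι → ℂ)
    (f : ι → Idx d → ℂ) (h : ∀ i ∈ s, Sq w (f i)) : Sq w (fun n => ∑ i ∈ s, c i * f i n) := by
  classical
  induction s using Finset.induction_on with
  | empty => simp [Sq, summable_zero]
  | insert i s hi ih =>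
    have h1 := h i (Finset.mem_insert_self _ _)
    have h2 := ih fun i hi => h i (Finset.mem_insert_of_mem hi)
    unfold Sq at *
    refine Summable.of_nonneg_of_le (fun n => mul_nonneg (sq_nonneg _) (hw n).le) (fun n => ?_)
      ((h1.mul_left (2 * ‖c i‖ ^ 2)).add (h2.mul_left 2))
    beta_reduce
    rw [Finset.sum_insert hi]
    have h3 := norm_add_le (c i * f i n) (∑ i ∈ s, c i * f i n)
    rw [norm_mul] at h3
    have h4 : ‖c i * f i n + ∑ i ∈ s, c i * f i n‖ ^ 2
        ≤ 2 * (‖c i‖ * ‖f i n‖) ^ 2 + 2 * ‖∑ i ∈ s, c i * f i n‖ ^ 2 := by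
      have := pow_le_pow_left₀ (norm_nonneg _) h3 2
      nlinarith [sq_nonneg (‖c i‖ * ‖f i n‖ - ‖∑ i ∈ s, c i * f i n‖)]
    have := mul_le_mul_of_nonneg_right h4 (hw n).le
    linarith

lemma Sq_Bs (k : Idx d) (g : Idx d → ℂ) (hg : Sq (beta d) g) : Sq (beta d) (Bs k g) := by
  have h := hg.comp_injective (add_left_injective k)
  refine Summable.of_nonneg_of_le (fun n => mul_nonneg (sq_nonneg _) (beta_pos n).le)
    (fun n => ?_) h
  exact mul_le_mul_of_nonneg_left (beta_le_add n k) (sq_nonneg _)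

lemma not_le_of_not_range {k n : Idx d} (h : n ∉ Set.range (fun m : Idx d => m + k)) :
    ¬ k ≤ n := fun hk => h ⟨n - k, tsub_add_cancel_of_le hk⟩

lemma Sq_Ms (X : Set (Idx d)) (k : Idx d) (a : Idx d → ℂ) (ha : Sq (fun n => (beta d n)⁻¹) a) :
    Sq (fun n => (beta d n)⁻¹) (Ms X k a) := by
  unfold Sq
  rw [← (add_left_injective k).summable_iff]
  · refine Summable.of_nonneg_of_le
      (fun n => mul_nonneg (sq_nonneg _) (inv_nonneg.mpr (beta_pos _).le)) (fun n => ?_) ha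
    have h1 : ‖Ms X k a (n + k)‖ ≤ ‖a n‖ := by
      unfold Ms
      split_ifs <;> simp
    have h2 := inv_anti₀ (beta_pos n) (beta_le_add n k)
    have := beta_pos (n + k)
    simp only [Function.comp_apply]
    gcongr
  · intro n hn
    simp [Ms, not_le_of_not_range hn]

lemma pairing {X : Set (Idx d)} (k : Idx d) (a g : Idx d → ℂ) (hg : Supp X g) :
    ∑' n, Ms X k a n * g n = ∑' n, a n * Bs k g n := by
  rw [← (add_left_injective k).tsum_eq]
  · congr 1
    funext n
    by_cases h : n + k ∈ X
    · simp [Ms, Bs, h]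
    · simp [Bs, hg _ h]
  · intro n hn
    by_contra h
    exact hn (by simp [Ms, not_le_of_not_range h])

/-- Duality: a bound for the transpose gives a bound. -/
lemma dual_bound (X : Set (Idx d)) (w v : Idx d → ℝ) (hw : ∀ n, 0 < w n)
    (hv : ∀ n, v n = (w n)⁻¹) (S T : (Idx d → ℂ) → (Idx d → ℂ))
    (hS : ∀ g, Supp X g → Sq w g → Supp X (S g) ∧ Sq w (S g))
    (hT : ∀ g, Supp X g → Sq v g → Sq v (T g))
    (hp : ∀ g a, Supp X g → Sq w g → Supp X a → Sq v a →
      ∑' n, S g n * a n = ∑' n, g n * T a n) (C : ℝ)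
    (hC : ∀ a, Supp X a ∧ Sq v a → Real.sqrt (∑' n, ‖T a n‖ ^ 2 * v n)
      ≤ C * Real.sqrt (∑' n, ‖a n‖ ^ 2 * v n)) (hC0 : 0 ≤ C)
    (g : Idx d → ℂ) (hg : Supp X g ∧ Sq w g) :
    Real.sqrt (∑' n, ‖S g n‖ ^ 2 * w n) ≤ C * Real.sqrt (∑' n, ‖g n‖ ^ 2 * w n) := by
  obtain ⟨hs1, hs2⟩ := hS g hg.1 hg.2
  set a : Idx d → ℂ := fun n => conj (S g n) * (w n : ℂ) with ha
  have e1 : ∀ n, ‖a n‖ ^ 2 * v n = ‖S g n‖ ^ 2 * w n := fun n => by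
    have := (hw n).ne'
    simp only [ha, hv, norm_mul, Complex.norm_conj, Complex.norm_real, Real.norm_eq_abs, mul_pow,
      sq_abs]
    field_simp
  have ha1 : Supp X a := fun n hn => by simp [ha, hs1 n hn]
  have ha2 : Sq v a := by unfold Sq; simp only [e1]; exact hs2
  have e2 : ∀ n, S g n * a n = ((‖S g n‖ ^ 2 * w n : ℝ) : ℂ) := fun n => by
    simp only [ha]
    rw [← mul_assoc, Complex.mul_conj, Complex.normSq_eq_norm_sq]
    push_cast; rfl
  have h1 := hp g a hg.1 hg.2 ha1 ha2
  have h2 := (cauchy_schwarz w v hw hv g (T a) hg.2 (hT a ha1 ha2)).2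
  rw [← h1] at h2
  simp only [e2] at h2
  rw [← Complex.ofReal_tsum, Complex.norm_real, Real.norm_eq_abs] at h2
  have h3 := hC a ⟨ha1, ha2⟩
  simp only [e1] at h3
  set A := ∑' n, ‖S g n‖ ^ 2 * w n with hA
  have hA0 : 0 ≤ A := tsum_nonneg fun n => mul_nonneg (sq_nonneg _) (hw n).le
  rw [abs_of_nonneg hA0] at h2
  set G := Real.sqrt (∑' n, ‖g n‖ ^ 2 * w n) with hG
  have hG0 : 0 ≤ G := Real.sqrt_nonneg _
  have h4 : A ≤ G * (C * Real.sqrt A) := h2.trans (mul_le_mul_of_nonneg_left h3 hG0)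
  rcases (Real.sqrt_nonneg A).eq_or_lt with h | h
  · rw [← h]; positivity
  · have h5 := Real.mul_self_sqrt hA0
    have h6 : Real.sqrt A * Real.sqrt A ≤ (C * G) * Real.sqrt A := by rw [h5]; linarith
    exact le_of_mul_le_mul_right h6 h

end Aux

/-- For a monotone set `X ⊆ ℕ^d` and every complex polynomial `Q` of
`d` variables, `‖Q(B^X)‖ = ‖Q(M_z^X)‖`, the operator norms being taken on `ℓ²(X,β)` and
on `H_d(X)` respectively. -/
theorem norm_QBX_eq_norm_QMX (d : ℕ) (X : Set (Idx d)) (hX : MonotoneSet d X)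
    (Q : MvPolynomial (Fin d) ℂ) :
    opNormL2 d X (polyOp d Q (BXop d X)) = opNormHdX d X (polyOp d Q (MopX d X)) := by
  have hβ : ∀ n, 0 < beta d n := beta_pos
  have hβ' : ∀ n, 0 < (beta d n)⁻¹ := fun n => inv_pos.mpr (hβ n)
  set S := polyOp d Q (BXop d X) with hSdef
  set T := polyOp d Q (MopX d X) with hTdef
  have eS : ∀ g, Supp X g → S g = fun n => ∑ k ∈ Q.support, Q.coeff k * Bs (⇑k) g n := by
    intro g hg
    funext n
    simp only [hSdef, polyOp]
    exact Finset.sum_congr rfl fun k _ => by rw [opPow_B hX _ _ hg]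
  have eT : ∀ g, Supp X g → T g = fun n => ∑ k ∈ Q.support, Q.coeff k * Ms X (⇑k) g n := by
    intro g hg
    funext n
    simp only [hTdef, polyOp]
    exact Finset.sum_congr rfl fun k _ => by rw [opPow_M hX _ _ hg]
  have hS : ∀ g, Supp X g → Sq (beta d) g → Supp X (S g) ∧ Sq (beta d) (S g) := by
    intro g hg hg2
    rw [eS g hg]
    refine ⟨fun n hn => Finset.sum_eq_zero fun k _ => ?_, Sq.sum hβ _ _ _ fun k _ => Sq_Bs _ _ hg2⟩
    rw [Bs_supp hX _ hg n hn, mul_zero]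
  have hT : ∀ g, Supp X g → Sq (fun n => (beta d n)⁻¹) g →
      Supp X (T g) ∧ Sq (fun n => (beta d n)⁻¹) (T g) := by
    intro g hg hg2
    rw [eT g hg]
    refine ⟨fun n hn => Finset.sum_eq_zero fun k _ => ?_,
      Sq.sum hβ' _ _ _ fun k _ => Sq_Ms _ _ _ hg2⟩
    rw [Ms_supp _ g n hn, mul_zero]
  have hp : ∀ g a, Supp X g → Sq (beta d) g → Supp X a → Sq (fun n => (beta d n)⁻¹) a →
      ∑' n, S g n * a n = ∑' n, g n * T a n := by
    intro g a hg hg2 ha ha2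
    have s1 : ∀ k : Idx d, Summable fun n => Bs k g n * a n := fun k =>
      (cauchy_schwarz _ _ hβ (fun _ => rfl) _ _ (Sq_Bs k g hg2) ha2).1
    have s2 : ∀ k : Idx d, Summable fun n => g n * Ms X k a n := fun k =>
      (cauchy_schwarz _ _ hβ (fun _ => rfl) _ _ hg2 (Sq_Ms X k a ha2)).1
    rw [eS g hg, eT a ha]
    simp only [Finset.sum_mul, Finset.mul_sum, mul_assoc, mul_left_comm (g _)]
    rw [Summable.tsum_finsetSum (s := Q.support) fun k _ => (s1 (⇑k)).mul_left _,
      Summable.tsum_finsetSum (s := Q.support) fun k _ => (s2 (⇑k)).mul_left _]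
    refine Finset.sum_congr rfl fun k _ => ?_
    rw [tsum_mul_left, tsum_mul_left]
    congr 1
    have := pairing (⇑k) a g hg
    simp only [mul_comm (g _), mul_comm (Bs _ _ _)]
    exact this.symm
  unfold opNormL2 opNormHdX
  congr 1
  ext C
  simp only [Set.mem_ofPred_eq, MemL2, MemHdX, MemHd, l2Norm, hdNorm, div_eq_mul_inv]
  refine and_congr_right fun hC0 => ⟨fun h => ?_, fun h => ?_⟩
  · refine dual_bound X (fun n => (beta d n)⁻¹) (beta d) hβ' (fun n => (inv_inv _).symm) T S hT
      (fun g h1 h2 => (hS g h1 h2).2) ?_ C h hC0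
    intro a g ha ha2 hg hg2
    have := hp g a hg hg2 ha ha2
    simp only [mul_comm (T _ _), mul_comm (a _)]
    exact this.symm
  · exact dual_bound X (beta d) (fun n => (beta d n)⁻¹) hβ (fun n => rfl) S T hS
      (fun g h1 h2 => (hT g h1 h2).2) hp C h hC0

end DruryArveson
end
end
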